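/- Let T = Σ_k p_k T_k where each T_k : B(H) → B(H) is CPTP, p_k > 0 and Σ_k p_k = 1. Assume: (i) there exists a density operator ρ with T_k(ρ) = ρ for all k; and (ii) supp(ρ) = supp(fix(T)) = supp(fix(T_k)) for every k. Then fix(T) = ∩_k fix(T_k); in particular, every X with T(X) = X satisfies T_k(X) = X for all k. -/

import Mathlib

namespace QDS

open Matrix
open scoped ComplexOrder

/-! ### Basic single-system notions -/

section Single

variable {ι : Type*} [Fintype ι] [DecidableEq ι]

open Classical in
/-- The (unique) positive-semidefinite square root of a positive-semidefinite matrix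
(junk value `0` if no positive-semidefinite square root exists). -/
noncomputable def msqrt (A : Matrix ι ι ℂ) : Matrix ι ι ℂ :=
  if h : ∃ B : Matrix ι ι ℂ, B.PosSemidef ∧ B * B = A then h.choose else 0

open Classical in
/-- The Moore–Penrose pseudoinverse of a matrix, defined via its characterizing
properties (it always exists and is unique for complex matrices). -/
noncomputable def mpinv (A : Matrix ι ι ℂ) : Matrix ι ι ℂ :=
  if h : ∃ B : Matrix ι ι ℂ,
      A * B * A = A ∧ B * A * B = B ∧ (A * B)ᴴ = A * B ∧ (B * A)ᴴ = B * A
  then h.choose else 0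

/-- A density operator: positive semidefinite with unit trace. -/
def IsDensity (ρ : Matrix ι ι ℂ) : Prop := ρ.PosSemidef ∧ ρ.trace = 1

/-- A CPTP map in Kraus (operator-sum) form. -/
def IsCPTP (T : Matrix ι ι ℂ →ₗ[ℂ] Matrix ι ι ℂ) : Prop :=
  ∃ (m : ℕ) (M : Fin m → Matrix ι ι ℂ),
    (∀ X, T X = ∑ k, M k * X * (M k)ᴴ) ∧ (∑ k, (M k)ᴴ * M k) = 1

/-- The Lindblad (QDS) generator with Hamiltonian `Hm` and noise operators `Lk`:
`L(X) = -i[Hm, X] + Σₖ (Lₖ X Lₖ† - ½{Lₖ†Lₖ, X})`. -/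
noncomputable def lindbladMap (Hm : Matrix ι ι ℂ) {m : ℕ} (Lk : Fin m → Matrix ι ι ℂ) :
    Matrix ι ι ℂ →ₗ[ℂ] Matrix ι ι ℂ :=
  (-Complex.I) • (LinearMap.mulLeft ℂ Hm - LinearMap.mulRight ℂ Hm) +
    ∑ k, ((LinearMap.mulRight ℂ (Lk k)ᴴ).comp (LinearMap.mulLeft ℂ (Lk k)) -
      ((1 : ℂ)/2) • (LinearMap.mulLeft ℂ ((Lk k)ᴴ * Lk k) +
        LinearMap.mulRight ℂ ((Lk k)ᴴ * Lk k)))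

/-- `L` is a QDS (Lindblad) generator. -/
def IsLindblad (L : Matrix ι ι ℂ →ₗ[ℂ] Matrix ι ι ℂ) : Prop :=
  ∃ Hm : Matrix ι ι ℂ, Hm.IsHermitian ∧
    ∃ (m : ℕ) (Lk : Fin m → Matrix ι ι ℂ), L = lindbladMap Hm Lk

/-- `Ld` is the Hilbert–Schmidt adjoint of `L` (w.r.t. `⟨X,Y⟩ = Tr(X†Y)`). -/
def IsHSAdjoint (L Ld : Matrix ι ι ℂ →ₗ[ℂ] Matrix ι ι ℂ) : Prop :=
  ∀ X Y : Matrix ι ι ℂ, ((Ld X)ᴴ * Y).trace = (Xᴴ * L Y).trace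

/-- The fixed-point set of a (super)operator. -/
def fixSet (T : Matrix ι ι ℂ →ₗ[ℂ] Matrix ι ι ℂ) : Set (Matrix ι ι ℂ) := {X | T X = X}

/-- The support of an operator: the orthogonal complement of its kernel,
equivalently the range of its adjoint. -/
noncomputable def msupp (A : Matrix ι ι ℂ) : Submodule ℂ (ι → ℂ) := LinearMap.range (Aᴴ).mulVecLin

/-- The support of a set of operators: the span of the union of their supports. -/
noncomputable def suppSet (W : Set (Matrix ι ι ℂ)) : Submodule ℂ (ι → ℂ) := ⨆ O ∈ W, msupp O

/-- The minimal modular-invariant distorted algebra generated by `W` relative to `ρ`: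
the smallest subspace containing `W` that is closed under the adjoint, under the
`ρ`-modified product `(X,Y) ↦ X ρ⁻ Y`, and under the modular map `X ↦ ρ^{1/2} X ρ⁻^{1/2}`. -/
noncomputable def Fdist (ρ : Matrix ι ι ℂ) (W : Set (Matrix ι ι ℂ)) :
    Submodule ℂ (Matrix ι ι ℂ) :=
  sInf {S : Submodule ℂ (Matrix ι ι ℂ) | W ⊆ S ∧ (∀ X ∈ S, Xᴴ ∈ S) ∧
    (∀ X ∈ S, ∀ Y ∈ S, X * mpinv ρ * Y ∈ S) ∧
    (∀ X ∈ S, msqrt ρ * X * mpinv (msqrt ρ) ∈ S)}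

/-- `ρ` is globally asymptotically stable for the generator `L`: it is invariant and every
solution of `ẋ = L(x)` starting at a density operator converges to `ρ` as `t → ∞`. -/
def IsGAS (L : Matrix ι ι ℂ →ₗ[ℂ] Matrix ι ι ℂ) (ρ : Matrix ι ι ℂ) : Prop :=
  L ρ = 0 ∧
  ∀ σ : Matrix ι ι ℂ, IsDensity σ →
    ∀ x : ℝ → Matrix ι ι ℂ, x 0 = σ →
      (∀ t : ℝ, ∀ i j, HasDerivAt (fun s : ℝ => x s i j) (L (x t) i j) t) →
      ∀ i j, Filter.Tendsto (fun t : ℝ => x t i j) Filter.atTop (nhds (ρ i j))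

end Single

/-! ### Bipartite notions -/

section Bipartite

variable {α β : Type*} [Fintype α] [Fintype β] [DecidableEq α] [DecidableEq β]

/-- Partial trace over the second factor. -/
noncomputable def ptraceB (ρ : Matrix (α × β) (α × β) ℂ) : Matrix α α ℂ :=
  Matrix.of fun i j => ∑ k : β, ρ (i, k) (j, k)

/-- The operator Schmidt span of `ρ` on the first factor:
`{Tr_B[(I ⊗ B) ρ] : B ∈ B(H_B)}`. -/
noncomputable def opSchmidtA (ρ : Matrix (α × β) (α × β) ℂ) : Set (Matrix α α ℂ) :=
  {A | ∃ B : Matrix β β ℂ,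
    A = ptraceB ((Matrix.kroneckerMap (· * ·) (1 : Matrix α α ℂ) B) * ρ)}

/-- The (vector) Schmidt span of `v ∈ V_A ⊗ V_B` relative to `V_A`: the image of `v`
under partial inner products with vectors of `V_B`. -/
def vSchmidtA (v : α × β → ℂ) : Set (α → ℂ) :=
  {w | ∃ b : β → ℂ, w = fun a => ∑ j, (starRingEnd ℂ) (b j) * v (a, j)}

/-- `Σ_A(v) ⊗ V_B` as a subspace of `V_A ⊗ V_B`. -/
noncomputable def extVSchmidtA (v : α × β → ℂ) : Submodule ℂ (α × β → ℂ) :=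
  Submodule.span ℂ {v' | ∃ w ∈ vSchmidtA v, ∃ b : β → ℂ, v' = fun p => w p.1 * b p.2}

end Bipartite

/-! ### Multipartite notions -/

section Multipartite

variable {n : ℕ} {d : Fin n → Type*} [∀ a, Fintype (d a)] [∀ a, DecidableEq (d a)]

/-- Index type of the neighborhood factor `H_N`. -/
abbrev nbhdIdx (d : Fin n → Type*) (N : Finset (Fin n)) : Type _ :=
  ∀ a : {x : Fin n // x ∈ N}, d a

/-- Index type of the complementary factor `H_N̄`. -/
abbrev nbhdCoIdx (d : Fin n → Type*) (N : Finset (Fin n)) : Type _ :=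
  ∀ a : {x : Fin n // ¬ x ∈ N}, d a

/-- The factorization `H ≃ H_N ⊗ H_N̄` at the level of index types. -/
def splitEquiv (d : Fin n → Type*) (N : Finset (Fin n)) :
    (∀ a, d a) ≃ nbhdIdx d N × nbhdCoIdx d N :=
  Equiv.piEquivPiSubtypeProd (fun x => x ∈ N) d

variable (d)

/-- The operator `A ⊗ B` on `H = H_N ⊗ H_N̄`, viewed as an operator on `H`. -/
noncomputable def splitLift (N : Finset (Fin n))
    (A : Matrix (nbhdIdx d N) (nbhdIdx d N) ℂ)
    (B : Matrix (nbhdCoIdx d N) (nbhdCoIdx d N) ℂ) :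
    Matrix (∀ a, d a) (∀ a, d a) ℂ :=
  (Matrix.kroneckerMap (· * ·) A B).submatrix (splitEquiv d N) (splitEquiv d N)

/-- The neighborhood operator `A ⊗ I_N̄` on `H`. -/
noncomputable def nbhdLift (N : Finset (Fin n))
    (A : Matrix (nbhdIdx d N) (nbhdIdx d N) ℂ) : Matrix (∀ a, d a) (∀ a, d a) ℂ :=
  splitLift d N A 1

/-- The operator `I_N ⊗ B` on `H`. -/
noncomputable def coLift (N : Finset (Fin n))
    (B : Matrix (nbhdCoIdx d N) (nbhdCoIdx d N) ℂ) : Matrix (∀ a, d a) (∀ a, d a) ℂ :=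
  splitLift d N 1 B

/-- The reduced state `ρ_N = Tr_N̄(ρ)` on the neighborhood `N`. -/
noncomputable def nbhdPtrace (N : Finset (Fin n)) (ρ : Matrix (∀ a, d a) (∀ a, d a) ℂ) :
    Matrix (nbhdIdx d N) (nbhdIdx d N) ℂ :=
  Matrix.of fun i j => ∑ k : nbhdCoIdx d N,
    ρ ((splitEquiv d N).symm (i, k)) ((splitEquiv d N).symm (j, k))

/-- The operator Schmidt span of `ρ` on the neighborhood `N`:
`Σ_N(ρ) = {Tr_N̄[(I_N ⊗ B) ρ] : B}`. -/
noncomputable def nbhdSchmidt (N : Finset (Fin n)) (ρ : Matrix (∀ a, d a) (∀ a, d a) ℂ) :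
    Set (Matrix (nbhdIdx d N) (nbhdIdx d N) ℂ) :=
  {A | ∃ B : Matrix (nbhdCoIdx d N) (nbhdCoIdx d N) ℂ,
    A = nbhdPtrace d N (coLift d N B * ρ)}

/-- The extended minimal modular-invariant distorted algebra
`F_{ρ_N}(Σ_N(ρ)) ⊗ B(H_N̄)` as a subspace of `B(H)`. -/
noncomputable def extF (N : Finset (Fin n)) (ρ : Matrix (∀ a, d a) (∀ a, d a) ℂ) :
    Submodule ℂ (Matrix (∀ a, d a) (∀ a, d a) ℂ) :=
  Submodule.span ℂ {X | ∃ A ∈ Fdist (nbhdPtrace d N ρ) (nbhdSchmidt d N ρ),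
    ∃ B : Matrix (nbhdCoIdx d N) (nbhdCoIdx d N) ℂ, X = splitLift d N A B}

/-- A neighborhood QDS generator for `N`: a Lindblad generator whose Hamiltonian and
noise operators all act as `X_N ⊗ I_N̄`. -/
def IsNbhdGen (N : Finset (Fin n))
    (L : Matrix (∀ a, d a) (∀ a, d a) ℂ →ₗ[ℂ] Matrix (∀ a, d a) (∀ a, d a) ℂ) : Prop :=
  ∃ HN : Matrix (nbhdIdx d N) (nbhdIdx d N) ℂ, HN.IsHermitian ∧
    ∃ (m : ℕ) (Lk : Fin m → Matrix (nbhdIdx d N) (nbhdIdx d N) ℂ),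
      L = lindbladMap (nbhdLift d N HN) fun k => nbhdLift d N (Lk k)

/-- A purely dissipative neighborhood generator for `N` (zero Hamiltonian in some
Lindblad representation). -/
def IsDissipNbhdGen (N : Finset (Fin n))
    (L : Matrix (∀ a, d a) (∀ a, d a) ℂ →ₗ[ℂ] Matrix (∀ a, d a) (∀ a, d a) ℂ) : Prop :=
  ∃ (m : ℕ) (Lk : Fin m → Matrix (nbhdIdx d N) (nbhdIdx d N) ℂ),
    L = lindbladMap 0 fun k => nbhdLift d N (Lk k)

/-- The family of neighborhood generators `Lj` is frustration free: every invariant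
state of the sum is invariant for each component. -/
def IsFFFamily {M : ℕ}
    (Lj : Fin M → (Matrix (∀ a, d a) (∀ a, d a) ℂ →ₗ[ℂ] Matrix (∀ a, d a) (∀ a, d a) ℂ)) :
    Prop :=
  ∀ ρ : Matrix (∀ a, d a) (∀ a, d a) ℂ, IsDensity ρ → (∑ j, Lj j) ρ = 0 → ∀ j, Lj j ρ = 0

/-- `ρ` is frustration-free quasi-locally stabilizable relative to the neighborhood
structure `Nb`. -/
def IsFFQLS {M : ℕ} (Nb : Fin M → Finset (Fin n))
    (ρ : Matrix (∀ a, d a) (∀ a, d a) ℂ) : Prop :=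
  ∃ Lj : Fin M → (Matrix (∀ a, d a) (∀ a, d a) ℂ →ₗ[ℂ] Matrix (∀ a, d a) (∀ a, d a) ℂ),
    (∀ j, IsNbhdGen d (Nb j) (Lj j)) ∧ IsFFFamily d Lj ∧ IsGAS (∑ j, Lj j) ρ

/-- A pure state `|ψ⟩⟨ψ|` is dissipatively quasi-locally stabilizable relative to `Nb`:
it is GAS for a QL generator whose components have zero Hamiltonian and neighborhood
noise operators annihilating `ψ`. -/
def IsDQLS {M : ℕ} (Nb : Fin M → Finset (Fin n)) (ψ : (∀ a, d a) → ℂ) : Prop :=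
  ∃ Lj : Fin M → (Matrix (∀ a, d a) (∀ a, d a) ℂ →ₗ[ℂ] Matrix (∀ a, d a) (∀ a, d a) ℂ),
    (∀ j, ∃ (m : ℕ) (Dk : Fin m → Matrix (nbhdIdx d (Nb j)) (nbhdIdx d (Nb j)) ℂ),
      Lj j = lindbladMap 0 (fun k => nbhdLift d (Nb j) (Dk k)) ∧
      ∀ k, (nbhdLift d (Nb j) (Dk k)).mulVec ψ = 0) ∧
    IsGAS (∑ j, Lj j) (Matrix.vecMulVec ψ (star ψ))

/-- The (vector) Schmidt span of `ψ` relative to the neighborhood factor `H_N`. -/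
def vecSchmidt (N : Finset (Fin n)) (ψ : (∀ a, d a) → ℂ) : Set (nbhdIdx d N → ℂ) :=
  {w | ∃ b : nbhdCoIdx d N → ℂ,
    w = fun i => ∑ k, (starRingEnd ℂ) (b k) * ψ ((splitEquiv d N).symm (i, k))}

/-- `Σ_N(ψ) ⊗ H_N̄` as a subspace of `H`. -/
noncomputable def extVecSchmidt (N : Finset (Fin n)) (ψ : (∀ a, d a) → ℂ) :
    Submodule ℂ ((∀ a, d a) → ℂ) :=
  Submodule.span ℂ {v | ∃ w ∈ vecSchmidt d N ψ, ∃ b : nbhdCoIdx d N → ℂ,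
    v = fun x => w ((splitEquiv d N) x).1 * b ((splitEquiv d N) x).2}

end Multipartite

/-! ### Statement 10 -/

/-!
For a channel `S` with Kraus operators `M i` and a positive semidefinite `ρ` fixed by `S`, the
quantity `∑ i, Tr([M i, Y] ρ [M i, Y]ᴴ) ≥ 0` equals `2 Tr(Y ρ Yᴴ) - 2 Re Tr(S(Y ρ) Yᴴ)`. Hence
`Re Tr(S(Y ρ) Yᴴ) ≤ Tr(Y ρ Yᴴ)`, and equality forces `[M i, Y] ρ = 0` for all `i`, that is
`S(Y ρ) = Y S(ρ) = Y ρ`. A fixed point `X` of the mixture is of the form `Y ρ` because its support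
lies in that of `ρ`; averaging the inequalities for the `T k` then gives an equality, so each of
them is an equality.
-/

lemma range_mulVecLin_le_range_mulVecLin_iff {l m n R : Type*} [Fintype m] [Fintype n]
    [CommSemiring R] {A : Matrix l m R} {B : Matrix l n R} :
    LinearMap.range A.mulVecLin ≤ LinearMap.range B.mulVecLin ↔
      ∃ Y : Matrix n m R, A = B * Y := by
  classical
  constructor
  · intro h
    have hcol (j : m) : ∃ y, B *ᵥ y = A.col j :=
      h ⟨Pi.single j 1, mulVec_single_one A j⟩
    choose y hy using hcol
    exact ⟨(of y)ᵀ, ext fun i j => (congrFun (hy j) i).symm⟩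
  · rintro ⟨Y, rfl⟩
    rw [mulVecLin_mul]
    exact LinearMap.range_comp_le_range _ _

lemma msupp_le_msupp_iff {ι : Type*} [Fintype ι] {A B : Matrix ι ι ℂ} :
    msupp A ≤ msupp B ↔ ∃ Y, A = Y * B := by
  rw [msupp, msupp, range_mulVecLin_le_range_mulVecLin_iff]
  constructor
  · rintro ⟨Y, hY⟩
    exact ⟨Yᴴ, by rw [← conjTranspose_conjTranspose A, hY, conjTranspose_mul,
      conjTranspose_conjTranspose]⟩
  · rintro ⟨Y, rfl⟩
    exact ⟨Yᴴ, conjTranspose_mul Y B⟩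

lemma msupp_le_suppSet {ι : Type*} [Fintype ι] {W : Set (Matrix ι ι ℂ)} {X : Matrix ι ι ℂ}
    (hX : X ∈ W) : msupp X ≤ suppSet W :=
  le_iSup₂_of_le X hX le_rfl

lemma trace_mul_mul_conjTranspose_eq_zero_iff {m n 𝕜 : Type*} [Fintype m] [Fintype n] [RCLike 𝕜]
    {ρ : Matrix n n 𝕜} (hρ : ρ.PosSemidef) {D : Matrix m n 𝕜} :
    (D * ρ * Dᴴ).trace = 0 ↔ D * ρ = 0 := by
  classical
  obtain ⟨B, rfl⟩ : ∃ B : Matrix n n 𝕜, ρ = Bᴴ * B := by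
    open MatrixOrder in exact CStarAlgebra.nonneg_iff_eq_star_mul_self.mp hρ.nonneg
  have hsq : D * (Bᴴ * B) * Dᴴ = (D * Bᴴ) * (D * Bᴴ)ᴴ := by
    simp only [conjTranspose_mul, conjTranspose_conjTranspose, Matrix.mul_assoc]
  rw [hsq, trace_mul_conjTranspose_self_eq_zero_iff, mul_conjTranspose_mul_self_eq_zero]

section DirichletForm

variable {κ n : Type*} [Fintype κ] [Fintype n]

/-- The Dirichlet form `∑ i, Tr([M i, Y] ρ [M i, Y]ᴴ)` at `Y` of the channel with Kraus operators
`M`, relative to the weight `ρ`. It measures how far `X ↦ ∑ i, M i * X * (M i)ᴴ` is from fixing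
`Y * ρ`. -/
def dirichletForm {R : Type*} [Ring R] [StarRing R] (M : κ → Matrix n n R) (ρ Y : Matrix n n R) :
    R :=
  ∑ i, (⁅M i, Y⁆ * ρ * ⁅M i, Y⁆ᴴ).trace

lemma dirichletForm_eq {R : Type*} [CommRing R] [StarRing R] [DecidableEq n]
    {M : κ → Matrix n n R} {ρ : Matrix n n R} (hM : ∑ i, (M i)ᴴ * M i = 1) (hρ : ρ.IsHermitian)
    (hfix : ∑ i, M i * ρ * (M i)ᴴ = ρ) (Y : Matrix n n R) :
    dirichletForm M ρ Y = 2 * (Y * ρ * Yᴴ).trace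
      - ((∑ i, M i * (Y * ρ) * (M i)ᴴ) * Yᴴ).trace
      - star ((∑ i, M i * (Y * ρ) * (M i)ᴴ) * Yᴴ).trace := by
  have expand (i : κ) : (⁅M i, Y⁆ * ρ * ⁅M i, Y⁆ᴴ).trace
      = (Y * ρ * Yᴴ * ((M i)ᴴ * M i)).trace + (Y * (M i * ρ * (M i)ᴴ) * Yᴴ).trace
        - (M i * (Y * ρ) * (M i)ᴴ * Yᴴ).trace - star (M i * (Y * ρ) * (M i)ᴴ * Yᴴ).trace := by
    have cycle : (Y * ρ * Yᴴ * ((M i)ᴴ * M i)).trace = (M i * (Y * ρ * Yᴴ) * (M i)ᴴ).trace := by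
      rw [← Matrix.mul_assoc, trace_mul_comm, ← Matrix.mul_assoc]
    rw [cycle, ← trace_conjTranspose, Ring.lie_def]
    simp only [conjTranspose_sub, conjTranspose_mul, conjTranspose_conjTranspose, hρ.eq,
      Matrix.sub_mul, Matrix.mul_sub, trace_sub, Matrix.mul_assoc]
    ring
  simp only [dirichletForm, expand, Finset.sum_sub_distrib, Finset.sum_add_distrib, ← star_sum,
    ← trace_sum, ← Finset.mul_sum, ← Finset.sum_mul, hM, hfix, Matrix.mul_one]
  ring

variable {𝕜 : Type*} [RCLike 𝕜] {M : κ → Matrix n n 𝕜} {ρ : Matrix n n 𝕜}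

lemma dirichletForm_nonneg (M : κ → Matrix n n 𝕜) (hρ : ρ.PosSemidef) (Y : Matrix n n 𝕜) :
    0 ≤ dirichletForm M ρ Y :=
  Finset.sum_nonneg fun _ _ => (hρ.mul_mul_conjTranspose_same _).trace_nonneg

lemma dirichletForm_eq_zero_iff (hρ : ρ.PosSemidef) {Y : Matrix n n 𝕜} :
    dirichletForm M ρ Y = 0 ↔ ∀ i, ⁅M i, Y⁆ * ρ = 0 := by
  rw [dirichletForm, Finset.sum_eq_zero_iff_of_nonneg fun _ _ =>
    (hρ.mul_mul_conjTranspose_same _).trace_nonneg]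
  simp only [Finset.mem_univ, true_imp_iff, trace_mul_mul_conjTranspose_eq_zero_iff hρ]

lemma re_dirichletForm [DecidableEq n] (hM : ∑ i, (M i)ᴴ * M i = 1) (hρ : ρ.IsHermitian)
    (hfix : ∑ i, M i * ρ * (M i)ᴴ = ρ) (Y : Matrix n n 𝕜) :
    RCLike.re (dirichletForm M ρ Y) = 2 * (RCLike.re (Y * ρ * Yᴴ).trace
      - RCLike.re ((∑ i, M i * (Y * ρ) * (M i)ᴴ) * Yᴴ).trace) := by
  simp only [dirichletForm_eq hM hρ hfix, map_sub, RCLike.star_def, RCLike.conj_re, two_mul,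
    map_add]
  ring

end DirichletForm

lemma sum_mul_mul_conjTranspose_of_lie_mul_eq_zero {κ n R : Type*} [Fintype κ] [Fintype n]
    [Ring R] [StarRing R] {M : κ → Matrix n n R} {ρ Y : Matrix n n R}
    (h : ∀ i, ⁅M i, Y⁆ * ρ = 0) :
    ∑ i, M i * (Y * ρ) * (M i)ᴴ = Y * ∑ i, M i * ρ * (M i)ᴴ := by
  have hcomm (i : κ) : M i * (Y * ρ) = Y * (M i * ρ) := by
    simpa only [Ring.lie_def, Matrix.sub_mul, Matrix.mul_assoc, sub_eq_zero] using h i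
  simp only [hcomm, Finset.mul_sum, Matrix.mul_assoc]

section CPTP

variable {ι : Type*} [Fintype ι] [DecidableEq ι]
  {T : Matrix ι ι ℂ →ₗ[ℂ] Matrix ι ι ℂ} {ρ : Matrix ι ι ℂ}

lemma IsCPTP.re_trace_map_mul_le (hT : IsCPTP T) (hρ : ρ.PosSemidef) (hfix : T ρ = ρ)
    (Y : Matrix ι ι ℂ) : (T (Y * ρ) * Yᴴ).trace.re ≤ (Y * ρ * Yᴴ).trace.re := by
  obtain ⟨m, M, hTM, hM⟩ := hT
  have hform := re_dirichletForm hM hρ.isHermitian (hTM ρ ▸ hfix) Y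
  rw [← hTM] at hform
  have hnonneg := (RCLike.nonneg_iff.mp (dirichletForm_nonneg M hρ Y)).1
  exact sub_nonneg.mp (by simpa [hform] using hnonneg)

lemma IsCPTP.re_trace_map_mul_eq_iff (hT : IsCPTP T) (hρ : ρ.PosSemidef) (hfix : T ρ = ρ)
    {Y : Matrix ι ι ℂ} :
    (T (Y * ρ) * Yᴴ).trace.re = (Y * ρ * Yᴴ).trace.re ↔ T (Y * ρ) = Y * ρ := by
  refine ⟨fun h => ?_, fun h => by rw [h]⟩
  obtain ⟨m, M, hTM, hM⟩ := hT
  have hform := re_dirichletForm hM hρ.isHermitian (hTM ρ ▸ hfix) Y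
  rw [← hTM] at hform
  have hre : RCLike.re (dirichletForm M ρ Y) = 0 := by simp [hform, h]
  have him := (RCLike.nonneg_iff.mp (dirichletForm_nonneg M hρ Y)).2
  have hzero : dirichletForm M ρ Y = 0 := RCLike.ext (by simpa using hre) (by simpa using him)
  rw [hTM, sum_mul_mul_conjTranspose_of_lie_mul_eq_zero ((dirichletForm_eq_zero_iff hρ).mp hzero),
    ← hTM, hfix]

end CPTP

lemma mem_fixSet_sum_smul_iff {κ ι : Type*} [Fintype κ] {p : κ → ℝ}
    {T : κ → (Matrix ι ι ℂ →ₗ[ℂ] Matrix ι ι ℂ)} {X : Matrix ι ι ℂ} :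
    X ∈ fixSet (∑ k, (p k : ℂ) • T k) ↔ ∑ k, (p k : ℂ) • T k X = X := by
  simp only [fixSet, Set.mem_ofPred_eq, LinearMap.sum_apply, LinearMap.smul_apply]

lemma iInter_fixSet_subset_fixSet_sum_smul {κ ι : Type*} [Fintype κ] {p : κ → ℝ}
    (hpsum : ∑ k, p k = 1) (T : κ → (Matrix ι ι ℂ →ₗ[ℂ] Matrix ι ι ℂ)) :
    ⋂ k, fixSet (T k) ⊆ fixSet (∑ k, (p k : ℂ) • T k) := by
  intro X hX
  have hTX (k : κ) : T k X = X := Set.mem_iInter.mp hX k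
  rw [mem_fixSet_sum_smul_iff]
  simp only [hTX, ← Finset.sum_smul, ← Complex.ofReal_sum, hpsum, Complex.ofReal_one, one_smul]

theorem stmt10_general {κ ι : Type*} [Fintype κ] [Fintype ι] [DecidableEq ι]
    {p : κ → ℝ} (hp : ∀ k, 0 < p k) (hpsum : ∑ k, p k = 1)
    {T : κ → (Matrix ι ι ℂ →ₗ[ℂ] Matrix ι ι ℂ)} (hT : ∀ k, IsCPTP (T k))
    {ρ : Matrix ι ι ℂ} (hρ : ρ.PosSemidef) (hρk : ∀ k, T k ρ = ρ)
    (hsupp : suppSet (fixSet (∑ k, (p k : ℂ) • T k)) ≤ msupp ρ) :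
    fixSet (∑ k, (p k : ℂ) • T k) = ⋂ k, fixSet (T k) := by
  refine Set.Subset.antisymm (fun X hX => Set.mem_iInter.mpr fun k => ?_)
    (iInter_fixSet_subset_fixSet_sum_smul hpsum T)
  obtain ⟨Y, rfl⟩ : ∃ Y, X = Y * ρ := msupp_le_msupp_iff.mp ((msupp_le_suppSet hX).trans hsupp)
  have hle (k : κ) : p k * (T k (Y * ρ) * Yᴴ).trace.re ≤ p k * (Y * ρ * Yᴴ).trace.re :=
    mul_le_mul_of_nonneg_left ((hT k).re_trace_map_mul_le hρ (hρk k) Y) (hp k).le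
  have hsum : ∑ k, p k * (T k (Y * ρ) * Yᴴ).trace.re = ∑ k, p k * (Y * ρ * Yᴴ).trace.re := by
    calc ∑ k, p k * (T k (Y * ρ) * Yᴴ).trace.re
      _ = ((∑ k, (p k : ℂ) • T k (Y * ρ)) * Yᴴ).trace.re := by
        simp [Finset.sum_mul, trace_sum]
      _ = (Y * ρ * Yᴴ).trace.re := by rw [mem_fixSet_sum_smul_iff.mp hX]
      _ = ∑ k, p k * (Y * ρ * Yᴴ).trace.re := by rw [← Finset.sum_mul, hpsum, one_mul]
  have heq := (Finset.sum_eq_sum_iff_of_le fun k _ => hle k).mp hsum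
  exact ((hT k).re_trace_map_mul_eq_iff hρ (hρk k)).mp
    (mul_left_cancel₀ (hp k).ne' (heq k (Finset.mem_univ k)))

theorem stmt10
    {ι : Type*} [Fintype ι] [DecidableEq ι] {K : ℕ}
    (p : Fin K → ℝ) (hp : ∀ k, 0 < p k) (hpsum : ∑ k, p k = 1)
    (T : Fin K → (Matrix ι ι ℂ →ₗ[ℂ] Matrix ι ι ℂ)) (hT : ∀ k, IsCPTP (T k))
    (ρ : Matrix ι ι ℂ) (hρ : IsDensity ρ)
    (hρk : ∀ k, T k ρ = ρ)
    (hsupp : msupp ρ = suppSet (fixSet (∑ k, (p k : ℂ) • T k)))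
    (hsuppk : ∀ k, msupp ρ = suppSet (fixSet (T k))) :
    fixSet (∑ k, (p k : ℂ) • T k) = ⋂ k, fixSet (T k) := by
  exact stmt10_general hp hpsum hT hρ.1 hρk hsupp.ge


end QDS
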